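/- Let c > 0, let 𝒜⁰ : ℝ × ℝ³ → ℝ and 𝓐 : ℝ × ℝ³ → ℝ³ be C² with 𝓐(t, ·) supported in a fixed compact set 𝒦 ⊂ ℝ³ for all t in an open interval I, and suppose the homentropic equation of motion ℰ + (v/c)×ℬ = 0 holds everywhere (the case dθ = 0), where ℰ = −∇𝒜⁰ − c⁻¹∂_t𝓐, ℬ = ∇×𝓐, and v : ℝ × ℝ³ → ℝ³ is any velocity field. Then the semi-relativistic helicity C(t) = ∫_{ℝ³} (𝓐·ℬ)(t, x) d³x is constant on I, regardless of the relativistic factor γ. -/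

import Mathlib

open MeasureTheory

noncomputable section

abbrev V3 := Fin 3 → ℝ

/-- Euclidean dot product on ℝ³. -/
def dot3 (a b : V3) : ℝ := ∑ i, a i * b i

/-- Cross product on ℝ³. -/
def cross3 (a b : V3) : V3 := fun i => a (i + 1) * b (i + 2) - a (i + 2) * b (i + 1)

/-- Time derivative ∂_t of a scalar function on ℝ × ℝ³. -/
def pdt (f : ℝ × V3 → ℝ) (p : ℝ × V3) : ℝ := fderiv ℝ f p ((1 : ℝ), (0 : V3))

/-- Spatial derivative ∂_j of a scalar function on ℝ × ℝ³. -/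
def pdx (j : Fin 3) (f : ℝ × V3 → ℝ) (p : ℝ × V3) : ℝ :=
  fderiv ℝ f p ((0 : ℝ), Pi.single j 1)

/-- Spatial gradient. -/
def grad3 (f : ℝ × V3 → ℝ) (p : ℝ × V3) : V3 := fun j => pdx j f p

/-- Spatial curl. -/
def curl3 (A : ℝ × V3 → V3) (p : ℝ × V3) : V3 := fun i =>
  pdx (i + 1) (fun q => A q (i + 2)) p - pdx (i + 2) (fun q => A q (i + 1)) p

/-- Spatial divergence. -/
def div3 (A : ℝ × V3 → V3) (p : ℝ × V3) : ℝ := ∑ j, pdx j (fun q => A q j) p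

/-- ℰ = −∇𝒜⁰ − c⁻¹ ∂_t 𝓐. -/
def Efield (c : ℝ) (A0 : ℝ × V3 → ℝ) (A : ℝ × V3 → V3) (p : ℝ × V3) : V3 := fun i =>
  -grad3 A0 p i - c⁻¹ * fderiv ℝ (fun q => A q i) p ((1 : ℝ), (0 : V3))

/-- ℬ = ∇×𝓐. -/
def Bfield (A : ℝ × V3 → V3) (p : ℝ × V3) : V3 := curl3 A p

/-- The semi-relativistic helicity C(t) = ∫_{ℝ³} 𝓐·ℬ d³x. -/
def semiHelicity (A : ℝ × V3 → V3) (t : ℝ) : ℝ :=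
  ∫ x : V3, dot3 (A (t, x)) (Bfield A (t, x))


def DD (u : ℝ × V3) (f : ℝ × V3 → ℝ) : ℝ × V3 → ℝ := fun p => fderiv ℝ f p u

lemma DD_mul (u p : ℝ × V3) {f g : ℝ × V3 → ℝ} (hf : ContDiff ℝ 1 f) (hg : ContDiff ℝ 1 g) :
    DD u (fun q => f q * g q) p = DD u f p * g p + f p * DD u g p := by
  have h1 := (hf.differentiable (by norm_num)) p
  have h2 := (hg.differentiable (by norm_num)) p
  unfold DD
  rw [fderiv_fun_mul h1 h2]
  simp
  ring

lemma DD_add (u p : ℝ × V3) {f g : ℝ × V3 → ℝ} (hf : ContDiff ℝ 1 f) (hg : ContDiff ℝ 1 g) :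
    DD u (fun q => f q + g q) p = DD u f p + DD u g p := by
  have h1 := (hf.differentiable (by norm_num)) p
  have h2 := (hg.differentiable (by norm_num)) p
  unfold DD
  rw [fderiv_fun_add h1 h2]
  simp

lemma DD_sub (u p : ℝ × V3) {f g : ℝ × V3 → ℝ} (hf : ContDiff ℝ 1 f) (hg : ContDiff ℝ 1 g) :
    DD u (fun q => f q - g q) p = DD u f p - DD u g p := by
  have h1 := (hf.differentiable (by norm_num)) p
  have h2 := (hg.differentiable (by norm_num)) p
  unfold DD
  rw [fderiv_fun_sub h1 h2]
  simp

lemma DD_const_mul (u p : ℝ × V3) (k : ℝ) {f : ℝ × V3 → ℝ} (hf : ContDiff ℝ 1 f) :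
    DD u (fun q => k * f q) p = k * DD u f p := by
  have h1 := (hf.differentiable (by norm_num)) p
  unfold DD
  rw [fderiv_const_mul h1]
  simp

lemma DD_contDiff (u : ℝ × V3) {f : ℝ × V3 → ℝ} (hf : ContDiff ℝ 2 f) :
    ContDiff ℝ 1 (DD u f) :=
  (hf.fderiv_right (m := 1) (by norm_num)).clm_apply contDiff_const

lemma DD_continuous (u : ℝ × V3) {f : ℝ × V3 → ℝ} (hf : ContDiff ℝ 1 f) :
    Continuous (DD u f) :=
  (hf.continuous_fderiv (by norm_num)).clm_apply continuous_const

lemma DD_comm (u w p : ℝ × V3) {f : ℝ × V3 → ℝ} (hf : ContDiff ℝ 2 f) :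
    DD u (DD w f) p = DD w (DD u f) p := by
  have hd : DifferentiableAt ℝ (fderiv ℝ f) p :=
    (hf.fderiv_right (m := 1) (by norm_num)).differentiable (by norm_num) p
  have h : ∀ u w : ℝ × V3, DD u (DD w f) p = fderiv ℝ (fderiv ℝ f) p u w := by
    intro u w
    unfold DD
    rw [fderiv_clm_apply hd (by fun_prop)]
    simp
  rw [h, h]
  exact (hf.contDiffAt.isSymmSndFDerivAt (by simp)).eq u w

lemma DD_zero (u : ℝ × V3) {f : ℝ × V3 → ℝ} {a b : ℝ} {K : Set V3} (hK : IsCompact K)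
    (hs : ∀ t ∈ Set.Ioo a b, ∀ x : V3, x ∉ K → f (t, x) = 0) :
    ∀ t ∈ Set.Ioo a b, ∀ x : V3, x ∉ K → DD u f (t, x) = 0 := by
  intro t ht x hx
  have ho : IsOpen (Set.Ioo a b ×ˢ Kᶜ) := isOpen_Ioo.prod hK.isClosed.isOpen_compl
  have he : f =ᶠ[nhds (t, x)] fun _ => 0 := by
    filter_upwards [ho.mem_nhds (Set.mk_mem_prod ht hx)] with q hq
    exact hs q.1 hq.1 q.2 hq.2
  unfold DD
  rw [he.fderiv_eq]
  simp

lemma integ_of_zero {f : V3 → ℝ} (hf : Continuous f) {K : Set V3} (hK : IsCompact K)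
    (hs : ∀ x : V3, x ∉ K → f x = 0) : Integrable f :=
  hf.integrable_of_hasCompactSupport (HasCompactSupport.intro hK hs)

lemma int_DD_zero (w : V3) {f : ℝ × V3 → ℝ} (hf : ContDiff ℝ 1 f) {a b : ℝ} {K : Set V3}
    (hK : IsCompact K)
    (hs : ∀ t ∈ Set.Ioo a b, ∀ x : V3, x ∉ K → f (t, x) = 0) (t : ℝ) (ht : t ∈ Set.Ioo a b) :
    Integrable (fun x => DD (0, w) f (t, x)) ∧ ∫ x, DD (0, w) f (t, x) = 0 := by
  have hI : Integrable (fun x => DD (0, w) f (t, x)) :=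
    integ_of_zero ((DD_continuous _ hf).comp (by fun_prop)) hK (DD_zero _ hK hs t ht)
  refine ⟨hI, ?_⟩
  have hI0 : Integrable (fun x => f (t, x)) :=
    integ_of_zero (hf.continuous.comp (by fun_prop)) hK (hs t ht)
  have hg : ∀ x, HasFDerivAt (fun x => f (t, x))
      ((fderiv ℝ f (t, x)).comp (ContinuousLinearMap.inr ℝ ℝ V3)) x := fun x =>
    ((hf.differentiable (by norm_num)) (t, x)).hasFDerivAt.comp x (hasFDerivAt_prodMk_right t x)
  have he : ∀ x, fderiv ℝ (fun x => f (t, x)) x w = DD (0, w) f (t, x) := by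
    intro x
    rw [(hg x).fderiv]
    simp [DD]
  have := integral_mul_fderiv_eq_neg_fderiv_mul_of_integrable (μ := (volume : Measure V3))
    (f := fun _ => (1 : ℝ)) (g := fun x => f (t, x)) (v := w) (by simp)
    (by simpa [he] using hI) (by simpa using hI0) (by simp)
    (fun x _ => (hg x).differentiableAt)
  simpa [he] using this

lemma hasDeriv_int {f : ℝ × V3 → ℝ} (hf : ContDiff ℝ 1 f) {a b : ℝ} {K : Set V3}
    (hK : IsCompact K)
    (hs : ∀ t ∈ Set.Ioo a b, ∀ x : V3, x ∉ K → f (t, x) = 0) (t : ℝ) (ht : t ∈ Set.Ioo a b) :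
    HasDerivAt (fun t => ∫ x, f (t, x)) (∫ x, DD (1, 0) f (t, x)) t := by
  obtain ⟨a', ha1, ha2⟩ := exists_between ht.1
  obtain ⟨b', hb1, hb2⟩ := exists_between ht.2
  have hc := DD_continuous (1, 0) hf
  obtain ⟨M, hM⟩ := (isCompact_Icc (a := a') (b := b')).prod hK |>.exists_bound_of_continuousOn
    hc.continuousOn
  refine (hasDerivAt_integral_of_dominated_loc_of_deriv_le (s := Set.Icc a' b')
    (F := fun t x => f (t, x)) (F' := fun t x => DD (1, 0) f (t, x))
    (bound := K.indicator (fun _ => M)) (Icc_mem_nhds ha2 hb1) ?_ ?_ ?_ ?_ ?_ ?_).2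
  · exact Filter.Eventually.of_forall fun s =>
      (hf.continuous.comp (by fun_prop : Continuous fun x : V3 => (s, x))).aestronglyMeasurable
  · exact integ_of_zero (hf.continuous.comp (by fun_prop)) hK (hs t ht)
  · exact (hc.comp (by fun_prop : Continuous fun x : V3 => (t, x))).aestronglyMeasurable
  · refine Filter.Eventually.of_forall fun x s hs' => ?_
    by_cases hx : x ∈ K
    · simpa [hx] using hM (s, x) ⟨hs', hx⟩
    · have := DD_zero (1, 0) hK hs s ⟨ha1.trans_le hs'.1, hs'.2.trans_lt hb2⟩ x hx
      simp [hx, this]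
  · exact (integrable_indicator_iff hK.measurableSet).2 (integrableOn_const hK.measure_lt_top.ne)
  · refine Filter.Eventually.of_forall fun x s hs' => ?_
    have h1 := ((hf.differentiable (by norm_num)) (s, x)).hasFDerivAt.comp_hasDerivAt s
      ((hasDerivAt_id s).prodMk (hasDerivAt_const s x))
    exact h1

lemma key_id (c : ℝ) (f x y z : ℝ × V3 → ℝ) (T e0 e1 e2 p : ℝ × V3)
    (hf : ContDiff ℝ 2 f) (hx : ContDiff ℝ 2 x) (hy : ContDiff ℝ 2 y) (hz : ContDiff ℝ 2 z)
    (B0 B1 B2 : ℝ × V3 → ℝ)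
    (h0 : B0 = fun q => DD e1 z q - DD e2 y q)
    (h1 : B1 = fun q => DD e2 x q - DD e0 z q)
    (h2 : B2 = fun q => DD e0 y q - DD e1 x q)
    (hE : DD T x p * B0 p + DD T y p * B1 p + DD T z p * B2 p
      = -c * (DD e0 f p * B0 p + DD e1 f p * B1 p + DD e2 f p * B2 p)) :
    DD T (fun q => x q * B0 q + y q * B1 q + z q * B2 q) p =
      DD e0 (fun q => (-2 * c) * (f q * B0 q) + (DD T y q * z q - DD T z q * y q)) p
      + DD e1 (fun q => (-2 * c) * (f q * B1 q) + (DD T z q * x q - DD T x q * z q)) p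
      + DD e2 (fun q => (-2 * c) * (f q * B2 q) + (DD T x q * y q - DD T y q * x q)) p := by
  have hf1 : ContDiff ℝ 1 f := hf.of_le (by norm_num)
  have hx1 : ContDiff ℝ 1 x := hx.of_le (by norm_num)
  have hy1 : ContDiff ℝ 1 y := hy.of_le (by norm_num)
  have hz1 : ContDiff ℝ 1 z := hz.of_le (by norm_num)
  have dx := fun u => DD_contDiff u hx
  have dy := fun u => DD_contDiff u hy
  have dz := fun u => DD_contDiff u hz
  have c0 : ContDiff ℝ 1 B0 := by rw [h0]; exact (dz _).sub (dy _)
  have c1 : ContDiff ℝ 1 B1 := by rw [h1]; exact (dx _).sub (dz _)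
  have c2 : ContDiff ℝ 1 B2 := by rw [h2]; exact (dy _).sub (dx _)
  have b0 : ∀ u, DD u B0 p = DD u (DD e1 z) p - DD u (DD e2 y) p := fun u => by
    rw [h0]; exact DD_sub u p (dz _) (dy _)
  have b1 : ∀ u, DD u B1 p = DD u (DD e2 x) p - DD u (DD e0 z) p := fun u => by
    rw [h1]; exact DD_sub u p (dx _) (dz _)
  have b2 : ∀ u, DD u B2 p = DD u (DD e0 y) p - DD u (DD e1 x) p := fun u => by
    rw [h2]; exact DD_sub u p (dy _) (dx _)
  have W : ∀ (u : ℝ × V3) (B s1 r1 s2 r2 : ℝ × V3 → ℝ), ContDiff ℝ 1 B → ContDiff ℝ 1 s1 →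
      ContDiff ℝ 1 r1 → ContDiff ℝ 1 s2 → ContDiff ℝ 1 r2 →
      DD u (fun q => (-2 * c) * (f q * B q) + (s1 q * r1 q - s2 q * r2 q)) p
      = (-2 * c) * (DD u f p * B p + f p * DD u B p) + (DD u s1 p * r1 p + s1 p * DD u r1 p
        - (DD u s2 p * r2 p + s2 p * DD u r2 p)) := by
    intro u B s1 r1 s2 r2 k1 k2 k3 k4 k5
    rw [DD_add u p (contDiff_const.mul (hf1.mul k1)) ((k2.mul k3).sub (k4.mul k5)),
      DD_const_mul u p _ (hf1.mul k1), DD_mul u p hf1 k1,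
      DD_sub u p (k2.mul k3) (k4.mul k5), DD_mul u p k2 k3, DD_mul u p k4 k5]
  rw [W _ _ _ _ _ _ c0 (dy _) hz1 (dz _) hy1, W _ _ _ _ _ _ c1 (dz _) hx1 (dx _) hz1,
    W _ _ _ _ _ _ c2 (dx _) hy1 (dy _) hx1,
    DD_add T p ((hx1.mul c0).add (hy1.mul c1)) (hz1.mul c2),
    DD_add T p (hx1.mul c0) (hy1.mul c1), DD_mul T p hx1 c0, DD_mul T p hy1 c1,
    DD_mul T p hz1 c2]
  simp only [b0, b1, b2]
  rw [DD_comm T e1 p hz, DD_comm T e2 p hy, DD_comm T e2 p hx, DD_comm T e0 p hz,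
    DD_comm T e0 p hy, DD_comm T e1 p hx, DD_comm e1 e0 p hz, DD_comm e2 e0 p hy,
    DD_comm e2 e1 p hx]
  have v0 := congrFun h0 p
  have v1 := congrFun h1 p
  have v2 := congrFun h2 p
  linear_combination 2 * hE - DD T x p * v0 - DD T y p * v1 - DD T z p * v2

/-- In a homentropic fluid (dθ = 0, i.e. ℰ + (v/c)×ℬ = 0) the semi-relativistic
    helicity is constant, regardless of the relativistic factor γ. -/
theorem semi_helicity_conservation_homentropic (c : ℝ) (hc : 0 < c)
    (A0 : ℝ × V3 → ℝ) (A : ℝ × V3 → V3) (v : ℝ × V3 → V3)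
    (hA0 : ContDiff ℝ 2 A0) (hA : ContDiff ℝ 2 A)
    (a b : ℝ) (𝒦 : Set V3) (h𝒦 : IsCompact 𝒦)
    (hsupp : ∀ t ∈ Set.Ioo a b, ∀ x : V3, x ∉ 𝒦 → A (t, x) = 0)
    (heqm : ∀ p, ∀ i : Fin 3,
      Efield c A0 A p i + cross3 (v p) (Bfield A p) i / c = 0) :
    ∀ t₁ ∈ Set.Ioo a b, ∀ t₂ ∈ Set.Ioo a b,
      semiHelicity A t₁ = semiHelicity A t₂ := by
  have hAi : ∀ i, ContDiff ℝ 2 (fun q => A q i) := fun i => contDiff_pi.1 hA i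
  let e : Fin 3 → ℝ × V3 := fun j => ((0 : ℝ), Pi.single j 1)
  let x : ℝ × V3 → ℝ := fun q => A q 0
  let y : ℝ × V3 → ℝ := fun q => A q 1
  let z : ℝ × V3 → ℝ := fun q => A q 2
  let T : ℝ × V3 := (1, 0)
  let B0 : ℝ × V3 → ℝ := fun q => DD (e 1) z q - DD (e 2) y q
  let B1 : ℝ × V3 → ℝ := fun q => DD (e 2) x q - DD (e 0) z q
  let B2 : ℝ × V3 → ℝ := fun q => DD (e 0) y q - DD (e 1) x q
  have hx : ContDiff ℝ 2 x := hAi 0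
  have hy : ContDiff ℝ 2 y := hAi 1
  have hz : ContDiff ℝ 2 z := hAi 2
  have hf1 : ContDiff ℝ 1 A0 := hA0.of_le (by norm_num)
  have hx1 : ContDiff ℝ 1 x := hx.of_le (by norm_num)
  have hy1 : ContDiff ℝ 1 y := hy.of_le (by norm_num)
  have hz1 : ContDiff ℝ 1 z := hz.of_le (by norm_num)
  have dx := fun u => DD_contDiff u hx
  have dy := fun u => DD_contDiff u hy
  have dz := fun u => DD_contDiff u hz
  have c0 : ContDiff ℝ 1 B0 := (dz _).sub (dy _)
  have c1 : ContDiff ℝ 1 B1 := (dx _).sub (dz _)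
  have c2 : ContDiff ℝ 1 B2 := (dy _).sub (dx _)
  have sx : ∀ t ∈ Set.Ioo a b, ∀ r : V3, r ∉ 𝒦 → x (t, r) = 0 := fun t ht r hr => by
    simp [x, hsupp t ht r hr]
  have sy : ∀ t ∈ Set.Ioo a b, ∀ r : V3, r ∉ 𝒦 → y (t, r) = 0 := fun t ht r hr => by
    simp [y, hsupp t ht r hr]
  have sz : ∀ t ∈ Set.Ioo a b, ∀ r : V3, r ∉ 𝒦 → z (t, r) = 0 := fun t ht r hr => by
    simp [z, hsupp t ht r hr]
  have s0 : ∀ t ∈ Set.Ioo a b, ∀ r : V3, r ∉ 𝒦 → B0 (t, r) = 0 := fun t ht r hr => by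
    simp [B0, DD_zero _ h𝒦 sy t ht r hr, DD_zero _ h𝒦 sz t ht r hr]
  have s1 : ∀ t ∈ Set.Ioo a b, ∀ r : V3, r ∉ 𝒦 → B1 (t, r) = 0 := fun t ht r hr => by
    simp [B1, DD_zero _ h𝒦 sx t ht r hr, DD_zero _ h𝒦 sz t ht r hr]
  have s2 : ∀ t ∈ Set.Ioo a b, ∀ r : V3, r ∉ 𝒦 → B2 (t, r) = 0 := fun t ht r hr => by
    simp [B2, DD_zero _ h𝒦 sx t ht r hr, DD_zero _ h𝒦 sy t ht r hr]
  have hE : ∀ p, DD T x p * B0 p + DD T y p * B1 p + DD T z p * B2 p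
      = -c * (DD (e 0) A0 p * B0 p + DD (e 1) A0 p * B1 p + DD (e 2) A0 p * B2 p) := by
    intro p
    have q0 : -DD (e 0) A0 p - c⁻¹ * DD T x p + (v p 1 * B2 p - v p 2 * B1 p) / c = 0 :=
      heqm p 0
    have q1 : -DD (e 1) A0 p - c⁻¹ * DD T y p + (v p 2 * B0 p - v p 0 * B2 p) / c = 0 :=
      heqm p 1
    have q2 : -DD (e 2) A0 p - c⁻¹ * DD T z p + (v p 0 * B1 p - v p 1 * B0 p) / c = 0 :=
      heqm p 2
    field_simp at q0 q1 q2
    linear_combination -(B0 p * q0) - B1 p * q1 - B2 p * q2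
  have hH : semiHelicity A = fun t => ∫ r : V3,
      (fun q => x q * B0 q + y q * B1 q + z q * B2 q) (t, r) := by
    funext t
    unfold semiHelicity
    congr 1
    funext r
    simp only [dot3, Fin.sum_univ_three]
    rfl
  have hder : ∀ t ∈ Set.Ioo a b, HasDerivAt (semiHelicity A) 0 t := by
    intro t ht
    rw [hH]
    have h := hasDeriv_int (f := fun q => x q * B0 q + y q * B1 q + z q * B2 q)
      (((hx1.mul c0).add (hy1.mul c1)).add (hz1.mul c2)) h𝒦
      (fun t ht r hr => by simp [sx t ht r hr, sy t ht r hr, sz t ht r hr]) t ht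
    have i0 := int_DD_zero (Pi.single 0 1)
      (f := fun q => (-2 * c) * (A0 q * B0 q) + (DD T y q * z q - DD T z q * y q))
      ((contDiff_const.mul (hf1.mul c0)).add (((dy _).mul hz1).sub ((dz _).mul hy1))) h𝒦
      (fun t ht r hr => by simp [s0 t ht r hr, sy t ht r hr, sz t ht r hr]) t ht
    have i1 := int_DD_zero (Pi.single 1 1)
      (f := fun q => (-2 * c) * (A0 q * B1 q) + (DD T z q * x q - DD T x q * z q))
      ((contDiff_const.mul (hf1.mul c1)).add (((dz _).mul hx1).sub ((dx _).mul hz1))) h𝒦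
      (fun t ht r hr => by simp [s1 t ht r hr, sx t ht r hr, sz t ht r hr]) t ht
    have i2 := int_DD_zero (Pi.single 2 1)
      (f := fun q => (-2 * c) * (A0 q * B2 q) + (DD T x q * y q - DD T y q * x q))
      ((contDiff_const.mul (hf1.mul c2)).add (((dx _).mul hy1).sub ((dy _).mul hx1))) h𝒦
      (fun t ht r hr => by simp [s2 t ht r hr, sx t ht r hr, sy t ht r hr]) t ht
    convert h using 1
    have hk := fun r : V3 => key_id c A0 x y z T (e 0) (e 1) (e 2) (t, r) hA0 hx hy hz
      B0 B1 B2 rfl rfl rfl (hE (t, r))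
    symm
    refine (integral_congr_ae (Filter.Eventually.of_forall hk)).trans ?_
    refine (integral_add (i0.1.add i1.1) i2.1).trans ?_
    have h01 := integral_add i0.1 i1.1
    rw [i0.2, i1.2, add_zero] at h01
    rw [i2.2, add_zero]
    exact h01
  intro t₁ h₁ t₂ h₂
  exact isOpen_Ioo.is_const_of_deriv_eq_zero isPreconnected_Ioo
    (fun t ht => (hder t ht).differentiableAt.differentiableWithinAt)
    (fun t ht => (hder t ht).deriv) h₁ h₂
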